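/- arXiv:1101.4665 — 4 statements merged into one kernel-verified Lean document; each statement's English description precedes it below -/
import Mathlib

section
/- Let V : ℝⁿ × ℝ × ℝ → ℝ, (φ, T, ξ) ↦ V(φ, T, ξ), be continuously differentiable, and let C : ℝⁿ × ℝ → ℝⁿ satisfy the Nielsen identity ∂V/∂ξ(φ, T, ξ) = − Σᵢ Cᵢ(φ, ξ) · ∂V/∂φᵢ(φ, T, ξ) for all (φ, T, ξ). Suppose φ⁽¹⁾, φ⁽²⁾ : ℝ → ℝⁿ and T_c : ℝ → ℝ are differentiable functions of ξ such that for all ξ: (i) V(φ⁽¹⁾(ξ), T_c(ξ), ξ) = V(φ⁽²⁾(ξ), T_c(ξ), ξ) (degeneracy), and (ii) ∂V/∂φᵢ vanishes at both (φ⁽¹⁾(ξ), T_c(ξ), ξ) and (φ⁽²⁾(ξ), T_c(ξ), ξ) for every i (stationarity). If at some ξ₀ the values ∂V/∂T(φ⁽¹⁾(ξ₀), T_c(ξ₀), ξ₀) and ∂V/∂T(φ⁽²⁾(ξ₀), T_c(ξ₀), ξ₀) are unequal, then dT_c/dξ(ξ₀) = 0. -/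
/-!
At a stationary point of `V(·, T, ξ)` the Nielsen identity also forces `∂V/∂ξ = 0`, so along a phase
`φ(ξ)` the function `(ξ, T) ↦ V(φ(ξ), T, ξ)` has differential `(∂V/∂T) dT`: to first order it does
not see `ξ`. The difference of these functions for the two phases vanishes on the graph of `T_c` and
has differential `(∂V/∂T⁽¹⁾ - ∂V/∂T⁽²⁾) dT` with nonzero coefficient, so implicit differentiation
gives `dT_c/dξ = 0`.
-/

open Asymptotics Filter Topology

section Coordinates

variable {R M ι L : Type*} [Semiring R] [AddCommMonoid M] [Module R M] [DecidableEq ι]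
  [FunLike L (ι → R) M] [LinearMapClass L R (ι → R) M]

theorem sum_smul_map_single [Fintype ι] (f : L) (v : ι → R) :
    ∑ i, v i • f (Pi.single i 1) = f v := by
  simp only [← map_smul, ← map_sum, ← pi_eq_sum_univ']

theorem map_eq_zero_of_forall_map_single [Finite ι] {f : L} (hf : ∀ i, f (Pi.single i 1) = 0)
    (v : ι → R) : f v = 0 := by
  have := Fintype.ofFinite ι
  simp only [← sum_smul_map_single f v, hf, smul_zero, Finset.sum_const_zero]

end Coordinates

section Calculus

variable {𝕜 E F G : Type*} [NontriviallyNormedField 𝕜]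
  [NormedAddCommGroup E] [NormedSpace 𝕜 E] [NormedAddCommGroup F] [NormedSpace 𝕜 F]
  [NormedAddCommGroup G] [NormedSpace 𝕜 G]

theorem fderiv_eq_coprod_partial {f : E × F → G} {p : E × F} (hf : DifferentiableAt 𝕜 f p) :
    fderiv 𝕜 f p =
      (fderiv 𝕜 (fun x => f (x, p.2)) p.1).coprod (fderiv 𝕜 (fun y => f (p.1, y)) p.2) := by
  have hleft : HasFDerivAt (fun x => f (x, p.2)) (fderiv 𝕜 f p ∘L .inl 𝕜 E F) p.1 :=
    hf.hasFDerivAt.comp p.1 (hasFDerivAt_prodMk_left p.1 p.2)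
  have hright : HasFDerivAt (fun y => f (p.1, y)) (fderiv 𝕜 f p ∘L .inr 𝕜 E F) p.2 :=
    hf.hasFDerivAt.comp p.2 (hasFDerivAt_prodMk_right p.1 p.2)
  rw [hleft.fderiv, hright.fderiv, ContinuousLinearMap.coprod_comp_inl_inr]

/-- Implicit differentiation where `f` is differentiable at a single point only, so that the
implicit function theorem does not apply and the solution `g` has to be given. -/
theorem hasFDerivAt_of_implicit {f : E × F → G} {f' : E × F →L[𝕜] G} {g : E → F} {g' : E →L[𝕜] F}
    {x₀ : E} {K : NNReal} (hf : HasFDerivAt f f' (x₀, g x₀)) (hg : ContinuousAt g x₀)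
    (hK : AntilipschitzWith K fun y => f' (0, y)) (hg' : ∀ v, f' (v, g' v) = 0)
    (hfg : ∀ᶠ x in 𝓝 x₀, f (x, g x) = f (x₀, g x₀)) : HasFDerivAt g g' x₀ := by
  let Δ : E → E × F := fun x => (x, g x) - (x₀, g x₀)
  let r : E → F := fun x => g x - g x₀ - g' (x - x₀)
  have hΔ (x : E) : Δ x = (x - x₀, g' (x - x₀)) + (0, r x) := by simp [Δ, r]
  have hf'Δ : (fun x => f' (0, r x)) =o[𝓝 x₀] Δ := by
    have hlin := hf.isLittleO.comp_tendsto (continuousAt_id.prodMk hg)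
    refine hlin.neg_left.congr' ?_ .rfl
    filter_upwards [hfg] with x hx
    have hf'r : f' (Δ x) = f' (0, r x) := by rw [hΔ, map_add, hg', zero_add]
    simp only [Function.comp_apply, id, hx, sub_self, zero_sub, neg_neg]
    exact hf'r
  have hrf' : r =O[𝓝 x₀] fun x => f' (0, r x) :=
    .of_bound K (.of_forall fun x => by
      simpa [← Prod.zero_eq_mk] using hK.le_mul_dist (r x) 0)
  have hrΔ : r =o[𝓝 x₀] Δ := hrf'.trans_isLittleO hf'Δ
  have hΔO : Δ =O[𝓝 x₀] fun x => x - x₀ := by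
    have h0r : (fun x => ((0 : E), r x)) =o[𝓝 x₀] Δ := (isLittleO_zero _ _).prod_left hrΔ
    refine h0r.right_isBigO_sub.trans ?_
    simp only [hΔ, add_sub_cancel_right]
    exact (isBigO_refl _ _).prod_left (g'.isBigO_sub _ _)
  exact .of_isLittleO (hrΔ.trans_isBigO hΔO)

theorem antilipschitzWith_smul_right {a : G} (ha : a ≠ 0) :
    AntilipschitzWith ‖a‖₊⁻¹ fun t : 𝕜 => t • a :=
  .of_le_mul_dist fun s t => by
    rw [dist_eq_norm, dist_eq_norm, ← sub_smul, norm_smul, NNReal.coe_inv, coe_nnnorm,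
      mul_comm ‖s - t‖, inv_mul_cancel_left₀ (norm_ne_zero_iff.mpr ha)]

end Calculus

section Nielsen

variable {𝕜 E G : Type*} [NontriviallyNormedField 𝕜]
  [NormedAddCommGroup E] [NormedSpace 𝕜 E] [NormedAddCommGroup G] [NormedSpace 𝕜 G]

/-- The Nielsen identity `∂V/∂ξ = -Cᵢ ∂V/∂φᵢ` at the point `(φ, T, ξ)`, where the vector `c` is the
value of the coefficient `C` there; the sum over `i` is the derivative of `V` in the direction `c`,
which makes sense for any normed space of fields. -/
def NielsenIdentityAt (V : E → 𝕜 → 𝕜 → G) (c φ : E) (T ξ : 𝕜) : Prop :=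
  deriv (V φ T) ξ = -fderiv 𝕜 (fun ψ => V ψ T ξ) φ c

theorem nielsenIdentityAt_iff_sum {ι : Type*} [Fintype ι] [DecidableEq ι]
    {V : (ι → 𝕜) → 𝕜 → 𝕜 → G} {c φ : ι → 𝕜} {T ξ : 𝕜} :
    NielsenIdentityAt V c φ T ξ ↔
      deriv (V φ T) ξ = -∑ i, c i • fderiv 𝕜 (fun ψ => V ψ T ξ) φ (Pi.single i 1) := by
  rw [sum_smul_map_single, NielsenIdentityAt]

theorem NielsenIdentityAt.deriv_eq_zero {V : E → 𝕜 → 𝕜 → G} {c φ : E} {T ξ : 𝕜}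
    (h : NielsenIdentityAt V c φ T ξ) (hstat : fderiv 𝕜 (fun ψ => V ψ T ξ) φ = 0) :
    deriv (V φ T) ξ = 0 := by
  rw [h, hstat, zero_apply, neg_zero]

theorem NielsenIdentityAt.hasFDerivAt_phase {V : E → 𝕜 → 𝕜 → G} {c : E} {φ : 𝕜 → E} {T ξ : 𝕜}
    (h : NielsenIdentityAt V c (φ ξ) T ξ)
    (hV : DifferentiableAt 𝕜 (fun p : E × 𝕜 × 𝕜 => V p.1 p.2.1 p.2.2) (φ ξ, T, ξ))
    (hφ : DifferentiableAt 𝕜 φ ξ) (hstat : fderiv 𝕜 (fun ψ => V ψ T ξ) (φ ξ) = 0) :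
    HasFDerivAt (fun q : 𝕜 × 𝕜 => V (φ q.1) q.2 q.1)
      ((ContinuousLinearMap.snd 𝕜 𝕜 𝕜).smulRight (deriv (fun t => V (φ ξ) t ξ) T)) (ξ, T) := by
  have hVTξ : DifferentiableAt 𝕜 (fun q : 𝕜 × 𝕜 => V (φ ξ) q.1 q.2) (T, ξ) :=
    hV.comp (T, ξ) (hasFDerivAt_prodMk_right (φ ξ) (T, ξ)).differentiableAt
  have hpath : HasFDerivAt (fun q : 𝕜 × 𝕜 => (φ q.1, q.2, q.1)) _ (ξ, T) :=
    (hφ.hasFDerivAt.comp (ξ, T) hasFDerivAt_fst).prodMk (hasFDerivAt_snd.prodMk hasFDerivAt_fst)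
  refine (hV.hasFDerivAt.comp (ξ, T) hpath).congr_fderiv ?_
  ext <;> simp [fderiv_eq_coprod_partial hV, fderiv_eq_coprod_partial hVTξ, hstat,
    h.deriv_eq_zero hstat]

theorem stmt_4_general {V : E → 𝕜 → 𝕜 → G} {c₁ c₂ : E} {φ₁ φ₂ : 𝕜 → E} {Tc : 𝕜 → 𝕜} {ξ₀ : 𝕜}
    (hV₁ : DifferentiableAt 𝕜 (fun p : E × 𝕜 × 𝕜 => V p.1 p.2.1 p.2.2) (φ₁ ξ₀, Tc ξ₀, ξ₀))
    (hV₂ : DifferentiableAt 𝕜 (fun p : E × 𝕜 × 𝕜 => V p.1 p.2.1 p.2.2) (φ₂ ξ₀, Tc ξ₀, ξ₀))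
    (hNielsen₁ : NielsenIdentityAt V c₁ (φ₁ ξ₀) (Tc ξ₀) ξ₀)
    (hNielsen₂ : NielsenIdentityAt V c₂ (φ₂ ξ₀) (Tc ξ₀) ξ₀)
    (hφ₁ : DifferentiableAt 𝕜 φ₁ ξ₀) (hφ₂ : DifferentiableAt 𝕜 φ₂ ξ₀) (hTc : ContinuousAt Tc ξ₀)
    (hdeg : ∀ᶠ ξ in 𝓝 ξ₀, V (φ₁ ξ) (Tc ξ) ξ = V (φ₂ ξ) (Tc ξ) ξ)
    (hstat₁ : fderiv 𝕜 (fun ψ => V ψ (Tc ξ₀) ξ₀) (φ₁ ξ₀) = 0)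
    (hstat₂ : fderiv 𝕜 (fun ψ => V ψ (Tc ξ₀) ξ₀) (φ₂ ξ₀) = 0)
    (hne : deriv (fun T => V (φ₁ ξ₀) T ξ₀) (Tc ξ₀) ≠ deriv (fun T => V (φ₂ ξ₀) T ξ₀) (Tc ξ₀)) :
    HasDerivAt Tc 0 ξ₀ := by
  have hgap := (hNielsen₁.hasFDerivAt_phase hV₁ hφ₁ hstat₁).sub
    (hNielsen₂.hasFDerivAt_phase hV₂ hφ₂ hstat₂)
  have hgraph : ∀ᶠ ξ in 𝓝 ξ₀, V (φ₁ ξ) (Tc ξ) ξ - V (φ₂ ξ) (Tc ξ) ξ =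
      V (φ₁ ξ₀) (Tc ξ₀) ξ₀ - V (φ₂ ξ₀) (Tc ξ₀) ξ₀ := by
    filter_upwards [hdeg] with ξ hξ
    rw [sub_eq_zero.mpr hξ, sub_eq_zero.mpr hdeg.self_of_nhds]
  have hlower := antilipschitzWith_smul_right (𝕜 := 𝕜) (sub_ne_zero.mpr hne)
  have hTc' : HasFDerivAt Tc (0 : 𝕜 →L[𝕜] 𝕜) ξ₀ :=
    hasFDerivAt_of_implicit hgap hTc (by simpa [smul_sub] using hlower) (by simp) hgraph
  simpa using hTc'.hasDerivAt

end Nielsen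

/-- Gauge independence of the critical temperature (Appendix C): if the
effective potential `V(φ, T, ξ)` satisfies the Nielsen identity
`∂V/∂ξ = −∑ᵢ Cᵢ ∂V/∂φᵢ`, and `φ⁽¹⁾(ξ), φ⁽²⁾(ξ), T_c(ξ)` are differentiable
with the degeneracy and stationarity conditions holding for all `ξ`, then at
any `ξ₀` where the two values of `∂V/∂T` differ, `dT_c/dξ(ξ₀) = 0`. -/
theorem stmt_4 {n : ℕ} (V : (Fin n → ℝ) → ℝ → ℝ → ℝ)
    (hV : ContDiff ℝ 1 (fun p : (Fin n → ℝ) × ℝ × ℝ => V p.1 p.2.1 p.2.2))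
    (C : (Fin n → ℝ) → ℝ → Fin n → ℝ)
    (hNielsen : ∀ (φ : Fin n → ℝ) (T ξ : ℝ),
      deriv (fun s => V φ T s) ξ =
        - ∑ i, C φ ξ i * fderiv ℝ (fun ψ => V ψ T ξ) φ (Pi.single i 1))
    (φ1 φ2 : ℝ → Fin n → ℝ) (Tc : ℝ → ℝ)
    (hφ1 : Differentiable ℝ φ1) (hφ2 : Differentiable ℝ φ2)
    (hTc : Differentiable ℝ Tc)
    (hdeg : ∀ ξ, V (φ1 ξ) (Tc ξ) ξ = V (φ2 ξ) (Tc ξ) ξ)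
    (hstat1 : ∀ ξ i, fderiv ℝ (fun ψ => V ψ (Tc ξ) ξ) (φ1 ξ) (Pi.single i 1) = 0)
    (hstat2 : ∀ ξ i, fderiv ℝ (fun ψ => V ψ (Tc ξ) ξ) (φ2 ξ) (Pi.single i 1) = 0)
    (ξ₀ : ℝ)
    (hne : deriv (fun T => V (φ1 ξ₀) T ξ₀) (Tc ξ₀)
         ≠ deriv (fun T => V (φ2 ξ₀) T ξ₀) (Tc ξ₀)) :
    deriv Tc ξ₀ = 0 := by
  have hVdiff := hV.differentiable one_ne_zero
  have hNielsenAt (φ : Fin n → ℝ) : NielsenIdentityAt V (C φ ξ₀) φ (Tc ξ₀) ξ₀ :=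
    nielsenIdentityAt_iff_sum.mpr (hNielsen φ (Tc ξ₀) ξ₀)
  have hgrad1 : fderiv ℝ (fun ψ => V ψ (Tc ξ₀) ξ₀) (φ1 ξ₀) = 0 :=
    ContinuousLinearMap.ext (map_eq_zero_of_forall_map_single (hstat1 ξ₀))
  have hgrad2 : fderiv ℝ (fun ψ => V ψ (Tc ξ₀) ξ₀) (φ2 ξ₀) = 0 :=
    ContinuousLinearMap.ext (map_eq_zero_of_forall_map_single (hstat2 ξ₀))
  exact (stmt_4_general (hVdiff _) (hVdiff _) (hNielsenAt _) (hNielsenAt _) (hφ1 ξ₀) (hφ2 ξ₀)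
    (hTc ξ₀).continuousAt (.of_forall hdeg) hgrad1 hgrad2 hne).deriv
end

section
/- Let V : ℝⁿ × ℝ → ℝ, (φ, ξ) ↦ V(φ, ξ), be twice continuously differentiable, and let C : ℝⁿ × ℝ → ℝⁿ be continuously differentiable, satisfying the Nielsen identity ∂V/∂ξ(φ, ξ) = − Σᵢ Cᵢ(φ, ξ) · ∂V/∂φᵢ(φ, ξ) for all (φ, ξ). Suppose φ_min : ℝ → ℝⁿ is a differentiable curve of stationary points, i.e. ∂V/∂φᵢ(φ_min(ξ), ξ) = 0 for every i and every ξ, and suppose the Hessian matrix (∂²V/∂φᵢ∂φⱼ)(φ_min(ξ), ξ) is invertible. Then dφ_min,j/dξ(ξ) = Cⱼ(φ_min(ξ), ξ) for every j; in particular, if C is not identically zero along the curve, the minimizing field is gauge dependent. -/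
/-!
The Nielsen identity says that `dV` annihilates the vector field `(C, 1)`. At a stationary point its
`φ`-part vanishes, and then so does its `ξ`-part: the whole of `dV` is zero along the curve.
Differentiating `dV (C, 1) = 0` where `dV = 0` leaves no derivative of `C`, only
`D²V (·, (C, 1)) = 0`, so `(C, 1)` lies in the kernel of the symmetric form `D²V`. Thus `∂_φ V`,
zero along the curve, has zero derivative in the direction `(C, 1)`; as the Hessian `∂²_φ V` is
bounded below, a continuous curve of zeros must be differentiable with velocity `C`.
-/

open Filter Topology Asymptotics
open scoped NNReal

section Calculus

variable {𝕜 : Type*} [NontriviallyNormedField 𝕜]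
  {E : Type*} [NormedAddCommGroup E] [NormedSpace 𝕜 E]
  {F : Type*} [NormedAddCommGroup F] [NormedSpace 𝕜 F]
  {G : Type*} [NormedAddCommGroup G] [NormedSpace 𝕜 G]

-- The vanishing of `A x` replaces differentiability of `c` in the product rule.
theorem hasFDerivAt_clm_apply_of_eq_zero {A : E → F →L[𝕜] G} {A' : E →L[𝕜] F →L[𝕜] G}
    {c : E → F} {x : E} (hA : HasFDerivAt A A' x) (hAx : A x = 0) (hc : ContinuousAt c x) :
    HasFDerivAt (fun y => A y (c y)) (A'.flip (c x)) x := by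
  have hA_variation : (fun y => A y (c y - c x)) =o[𝓝 x] fun y => y - x := by
    have hA_bigO : A =O[𝓝 x] fun y => y - x := by simpa [hAx] using hA.isBigO_sub
    have hc_littleO : (fun y => c y - c x) =o[𝓝 x] fun _ => (1 : ℝ) :=
      (isLittleO_one_iff ℝ).2 (by simpa using hc.sub_const (c x))
    have hprod := hA_bigO.norm_norm.mul_isLittleO hc_littleO.norm_left
    refine IsBigO.trans_isLittleO (.of_norm_le fun y => ?_) (by simpa using hprod)
    exact (A y).le_opNorm (c y - c x)
  have hA_const : HasFDerivAt (fun y => A y (c x)) (A'.flip (c x)) x := by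
    simpa using hA.clm_apply (hasFDerivAt_const (c x) x)
  refine .of_isLittleO ((hA_const.isLittleO.add hA_variation).congr_left fun y => ?_)
  simp only [hAx, map_sub, zero_apply]
  abel

theorem hasFDerivAt_of_eventually_eq_zero_of_antilipschitz {A : E × F → G} {A' : E × F →L[𝕜] G}
    {f : F → E} {f' : F →L[𝕜] E} {y : F} {K : ℝ≥0} (hA : HasFDerivAt A A' (f y, y))
    (hf : ContinuousAt f y) (hzero : ∀ᶠ z in 𝓝 y, A (f z, z) = 0)
    (hf' : ∀ v, A' (f' v, v) = 0)
    (hK : AntilipschitzWith K (A' ∘L ContinuousLinearMap.inl 𝕜 E F)) :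
    HasFDerivAt f f' y := by
  set r : F → E := fun z => f z - f y - f' (z - y)
  set Δ : F → E × F := fun z => (f z, z) - (f y, y)
  have hA'Δ : (fun z => A' (Δ z)) =o[𝓝 y] Δ := by
    have hA_along := hA.isLittleO.comp_tendsto (hf.prodMk continuousAt_id)
    refine hA_along.neg_left.congr' ?_ .rfl
    filter_upwards [hzero] with z hz
    simp only [Function.comp_apply, id_eq, hz, hzero.self_of_nhds, sub_self, zero_sub, neg_neg, Δ]
  have hr_bound : r =O[𝓝 y] fun z => A' (Δ z) := by
    refine .of_bound K (.of_forall fun z => ?_)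
    have hsplit : Δ z = (r z, 0) + (f' (z - y), z - y) := by simp [Δ, r]
    have hA'r : A' (Δ z) = (A' ∘L ContinuousLinearMap.inl 𝕜 E F) (r z) := by
      rw [hsplit, map_add, hf', add_zero]; rfl
    rw [hA'r]
    exact hK.le_mul_norm (map_zero _) (r z)
  have hrΔ : (fun z => (r z, (0 : F))) =o[𝓝 y] Δ :=
    (hr_bound.trans_isLittleO hA'Δ).prod_left (isLittleO_zero _ _)
  have hΔ_bound : Δ =O[𝓝 y] fun z => z - y := by
    have hgraph : Δ =O[𝓝 y] fun z => (f' (z - y), z - y) :=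
      hrΔ.right_isBigO_sub.congr_right fun z => by simp [Δ, r]
    exact hgraph.trans ((f'.isBigO_sub _ y).prod_left (isBigO_refl _ _))
  exact .of_isLittleO ((hr_bound.trans_isLittleO hA'Δ).trans_isBigO hΔ_bound)

theorem differentiableAt_fderiv_of_contDiffAt_two {f : E → F} {x : E} (hf : ContDiffAt 𝕜 2 f x) :
    DifferentiableAt 𝕜 (fderiv 𝕜 f) x :=
  (hf.fderiv_right (m := 1) (by norm_num)).differentiableAt one_ne_zero

theorem fderiv_prodMk_left {f : E → F → G} {p : E × F}
    (hf : DifferentiableAt 𝕜 (fun q : E × F => f q.1 q.2) p) :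
    fderiv 𝕜 (fun x => f x p.2) p.1 =
      fderiv 𝕜 (fun q : E × F => f q.1 q.2) p ∘L ContinuousLinearMap.inl 𝕜 E F :=
  (HasFDerivAt.comp (g := fun q : E × F => f q.1 q.2) (f := fun x => (x, p.2)) p.1
    hf.hasFDerivAt (hasFDerivAt_prodMk_left p.1 p.2)).fderiv

theorem deriv_prodMk_right {f : E → 𝕜 → G} {p : E × 𝕜}
    (hf : DifferentiableAt 𝕜 (fun q : E × 𝕜 => f q.1 q.2) p) :
    deriv (f p.1) p.2 = fderiv 𝕜 (fun q : E × 𝕜 => f q.1 q.2) p (0, 1) :=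
  (HasFDerivAt.comp_hasDerivAt (l := fun q : E × 𝕜 => f q.1 q.2) p.2 hf.hasFDerivAt
    ((hasDerivAt_const p.2 p.1).prodMk (hasDerivAt_id p.2))).deriv

theorem fderiv_apply_prodMk_one_eq_zero_iff {f : E → 𝕜 → G} {p : E × 𝕜} {v : E}
    (hf : DifferentiableAt 𝕜 (fun q : E × 𝕜 => f q.1 q.2) p) :
    fderiv 𝕜 (fun q : E × 𝕜 => f q.1 q.2) p (v, 1) = 0 ↔
      deriv (f p.1) p.2 = -fderiv 𝕜 (fun x => f x p.2) p.1 v := by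
  have hsplit : ((v, 1) : E × 𝕜) = (0, 1) + ContinuousLinearMap.inl 𝕜 E 𝕜 v := by simp
  rw [hsplit, map_add, deriv_prodMk_right hf, fderiv_prodMk_left hf,
    ContinuousLinearMap.comp_apply, eq_neg_iff_add_eq_zero]

theorem fderiv_eq_zero_of_fderiv_prodMk_left_eq_zero {f : E → 𝕜 → G} {p : E × 𝕜} {v : E}
    (hf : DifferentiableAt 𝕜 (fun q : E × 𝕜 => f q.1 q.2) p)
    (hleft : fderiv 𝕜 (fun x => f x p.2) p.1 = 0)
    (hv : fderiv 𝕜 (fun q : E × 𝕜 => f q.1 q.2) p (v, 1) = 0) :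
    fderiv 𝕜 (fun q : E × 𝕜 => f q.1 q.2) p = 0 := by
  have hright : fderiv 𝕜 (fun q : E × 𝕜 => f q.1 q.2) p (0, 1) = 0 := by
    rw [← deriv_prodMk_right hf, (fderiv_apply_prodMk_one_eq_zero_iff hf).1 hv, hleft]
    simp
  rw [fderiv_prodMk_left hf] at hleft
  ext
  · exact DFunLike.congr_fun hleft _
  · simpa using hright

theorem hasFDerivAt_fderiv_prodMk_left {f : E → F → G} {p : E × F}
    (hf : ContDiffAt 𝕜 2 (fun q : E × F => f q.1 q.2) p) :
    HasFDerivAt (fun q : E × F => fderiv 𝕜 (fun x => f x q.2) q.1)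
      ((ContinuousLinearMap.inl 𝕜 E F).precomp G ∘L
        fderiv 𝕜 (fderiv 𝕜 fun q : E × F => f q.1 q.2) p) p := by
  have hpartial : (fun q : E × F => fderiv 𝕜 (fun x => f x q.2) q.1) =ᶠ[𝓝 p] fun q =>
      (ContinuousLinearMap.inl 𝕜 E F).precomp G (fderiv 𝕜 (fun q : E × F => f q.1 q.2) q) := by
    filter_upwards [hf.eventually (by simp)] with q hq
    exact fderiv_prodMk_left (hq.differentiableAt two_ne_zero)
  exact (((ContinuousLinearMap.inl 𝕜 E F).precomp G).hasFDerivAt.comp p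
    (differentiableAt_fderiv_of_contDiffAt_two hf).hasFDerivAt).congr_of_eventuallyEq hpartial

end Calculus

section Coordinates

variable {ι : Type*} [Fintype ι] [DecidableEq ι]

theorem map_eq_sum_smul_map_single {R M L : Type*} [Semiring R] [AddCommMonoid M] [Module R M]
    [FunLike L (ι → R) M] [LinearMapClass L R (ι → R) M] (l : L) (x : ι → R) :
    l x = ∑ i, x i • l (Pi.single i 1) := by
  conv_lhs => rw [pi_eq_sum_univ' x, map_sum]
  simp only [map_smul]

variable {𝕜 : Type*} [NontriviallyNormedField 𝕜] [CompleteSpace 𝕜]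

theorem exists_antilipschitzWith_of_isUnit_matrix
    {B : (ι → 𝕜) →L[𝕜] (ι → 𝕜) →L[𝕜] 𝕜}
    (hB : IsUnit (Matrix.of fun i j => B (Pi.single i 1) (Pi.single j 1))) :
    ∃ K : ℝ≥0, AntilipschitzWith K B := by
  suffices hker : LinearMap.ker (B : (ι → 𝕜) →ₗ[𝕜] (ι → 𝕜) →L[𝕜] 𝕜) = ⊥ by
    obtain ⟨K, -, hK⟩ := LinearMap.exists_antilipschitzWith _ hker
    exact ⟨K, hK⟩
  refine LinearMap.ker_eq_bot'.2 fun u hu => Matrix.vecMul_injective_of_isUnit hB ?_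
  ext j
  have huj : B u (Pi.single j 1) = 0 := DFunLike.congr_fun hu _
  rw [map_eq_sum_smul_map_single B u] at huj
  simpa [Matrix.vecMul, dotProduct] using huj

theorem exists_antilipschitzWith_fderiv_fderiv_of_isUnit_matrix
    {f : (ι → 𝕜) → 𝕜} {x : ι → 𝕜} (hf : DifferentiableAt 𝕜 (fderiv 𝕜 f) x)
    (hHess : IsUnit (Matrix.of fun i j =>
      fderiv 𝕜 (fun y => fderiv 𝕜 f y (Pi.single j 1)) x (Pi.single i 1))) :
    ∃ K : ℝ≥0, AntilipschitzWith K (fderiv 𝕜 (fderiv 𝕜 f) x) := by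
  refine exists_antilipschitzWith_of_isUnit_matrix ?_
  simpa [fderiv_clm_apply hf (differentiableAt_const _)] using hHess

end Coordinates

section Nielsen

variable {𝕜 : Type*} [RCLike 𝕜]
  {E : Type*} [NormedAddCommGroup E] [NormedSpace 𝕜 E]
  {G : Type*} [NormedAddCommGroup G] [NormedSpace 𝕜 G]

theorem fderiv_fderiv_apply_eq_zero_of_fderiv_eq_zero {f : E → G} {c : E → E} {x : E}
    (hf : ContDiffAt 𝕜 2 f x) (hx : fderiv 𝕜 f x = 0) (hc : ContinuousAt c x)
    (hfc : ∀ᶠ y in 𝓝 x, fderiv 𝕜 f y (c y) = 0) :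
    fderiv 𝕜 (fderiv 𝕜 f) x (c x) = 0 := by
  have hflip : (fderiv 𝕜 (fderiv 𝕜 f) x).flip (c x) = 0 :=
    (hasFDerivAt_clm_apply_of_eq_zero
      (differentiableAt_fderiv_of_contDiffAt_two hf).hasFDerivAt hx hc).unique
      ((hasFDerivAt_const 0 x).congr_of_eventuallyEq hfc)
  ext u
  rw [hf.isSymmSndFDerivAt (by simp) (c x) u]
  exact DFunLike.congr_fun hflip u

theorem stmt_5_general {V : E → 𝕜 → G} {C : E → 𝕜 → E} {φmin : 𝕜 → E} {ξ : 𝕜} {K : ℝ≥0}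
    (hV : ContDiffAt 𝕜 2 (fun p : E × 𝕜 => V p.1 p.2) (φmin ξ, ξ))
    (hC : ContinuousAt (fun p : E × 𝕜 => C p.1 p.2) (φmin ξ, ξ))
    (hNielsen : ∀ᶠ p in 𝓝 (φmin ξ, ξ),
      deriv (V p.1) p.2 = -fderiv 𝕜 (fun ψ => V ψ p.2) p.1 (C p.1 p.2))
    (hφmin : ContinuousAt φmin ξ)
    (hstat : ∀ᶠ s in 𝓝 ξ, fderiv 𝕜 (fun ψ => V ψ s) (φmin s) = 0)
    (hHess : AntilipschitzWith K (fderiv 𝕜 (fderiv 𝕜 fun ψ => V ψ ξ) (φmin ξ))) :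
    HasDerivAt φmin (C (φmin ξ) ξ) ξ := by
  have hannihilates : ∀ᶠ p in 𝓝 (φmin ξ, ξ),
      fderiv 𝕜 (fun q : E × 𝕜 => V q.1 q.2) p (C p.1 p.2, 1) = 0 := by
    filter_upwards [hNielsen, hV.eventually (by simp)] with p hp hVp
    exact (fderiv_apply_prodMk_one_eq_zero_iff (hVp.differentiableAt two_ne_zero)).2 hp
  have hcritical : fderiv 𝕜 (fun q : E × 𝕜 => V q.1 q.2) (φmin ξ, ξ) = 0 :=
    fderiv_eq_zero_of_fderiv_prodMk_left_eq_zero (hV.differentiableAt two_ne_zero)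
      hstat.self_of_nhds hannihilates.self_of_nhds
  have hkernel : fderiv 𝕜 (fderiv 𝕜 fun q : E × 𝕜 => V q.1 q.2) (φmin ξ, ξ)
      (C (φmin ξ) ξ, 1) = 0 :=
    fderiv_fderiv_apply_eq_zero_of_fderiv_eq_zero (c := fun p => (C p.1 p.2, 1)) hV hcritical
      (hC.prodMk continuousAt_const) hannihilates
  have hgradient := hasFDerivAt_fderiv_prodMk_left hV
  refine hasFDerivAt_of_eventually_eq_zero_of_antilipschitz (K := K) hgradient hφmin hstat
    (fun t => ?_) ?_
  · have hdirection : (ContinuousLinearMap.toSpanSingleton 𝕜 (C (φmin ξ) ξ) t, t) =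
        t • (C (φmin ξ) ξ, (1 : 𝕜)) := by simp
    rw [hdirection, map_smul, ContinuousLinearMap.comp_apply, hkernel, map_zero, smul_zero]
  · rwa [← hgradient.fderiv, ← fderiv_prodMk_left
      (f := fun φ s => fderiv 𝕜 (fun ψ => V ψ s) φ) hgradient.differentiableAt]

end Nielsen

/-- Gauge dependence of the scalar minimizing field (Appendix D): along a
differentiable curve `φ_min(ξ)` of stationary points of the effective
potential `V(φ, ξ)` obeying the Nielsen identity `∂V/∂ξ = −∑ᵢ Cᵢ ∂V/∂φᵢ`,
if the Hessian at `φ_min(ξ)` is invertible then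
`dφ_min,j/dξ(ξ) = Cⱼ(φ_min(ξ), ξ)` for every `j`. -/
theorem stmt_5 {n : ℕ} (V : (Fin n → ℝ) → ℝ → ℝ)
    (hV : ContDiff ℝ 2 (fun p : (Fin n → ℝ) × ℝ => V p.1 p.2))
    (C : (Fin n → ℝ) → ℝ → Fin n → ℝ)
    (hC : ContDiff ℝ 1 (fun p : (Fin n → ℝ) × ℝ => C p.1 p.2))
    (hNielsen : ∀ (φ : Fin n → ℝ) (ξ : ℝ),
      deriv (fun s => V φ s) ξ =
        - ∑ i, C φ ξ i * fderiv ℝ (fun ψ => V ψ ξ) φ (Pi.single i 1))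
    (φmin : ℝ → Fin n → ℝ) (hφmin : Differentiable ℝ φmin)
    (hstat : ∀ ξ i, fderiv ℝ (fun ψ => V ψ ξ) (φmin ξ) (Pi.single i 1) = 0)
    (hHess : ∀ ξ, IsUnit (Matrix.of fun i j : Fin n =>
      fderiv ℝ (fun ψ => fderiv ℝ (fun χ => V χ ξ) ψ (Pi.single j 1))
        (φmin ξ) (Pi.single i 1))) :
    ∀ (ξ : ℝ) (j : Fin n), deriv (fun s => φmin s j) ξ = C (φmin ξ) ξ j := by
  intro ξ j
  have hgradient : DifferentiableAt ℝ (fderiv ℝ fun ψ => V ψ ξ) (φmin ξ) :=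
    differentiableAt_fderiv_of_contDiffAt_two (hV.comp (contDiff_prodMk_left ξ)).contDiffAt
  obtain ⟨K, hK⟩ := exists_antilipschitzWith_fderiv_fderiv_of_isUnit_matrix hgradient (hHess ξ)
  have hφ' : HasDerivAt φmin (C (φmin ξ) ξ) ξ :=
    stmt_5_general hV.contDiffAt hC.continuous.continuousAt
      (.of_forall fun p => by rw [hNielsen, map_eq_sum_smul_map_single]; rfl)
      hφmin.continuous.continuousAt
      (.of_forall fun s => by ext φ; simp [map_eq_sum_smul_map_single _ φ, hstat]) hK
  exact (hasDerivAt_pi.1 hφ' j).deriv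
end

section
/- Let V₀ : ℝ → ℝ be twice continuously differentiable and V₁, V₂ : ℝ → ℝ be continuously differentiable. Let φ : ℝ → ℝ be differentiable on a neighborhood of 0 with φ(0) = φ₀, where V₀′(φ₀) = 0 and V₀″(φ₀) ≠ 0, and suppose V₀′(φ(ℏ)) + ℏ·V₁′(φ(ℏ)) + ℏ²·V₂′(φ(ℏ)) = 0 for all ℏ near 0. Define g(ℏ) = V₀(φ(ℏ)) + ℏ·V₁(φ(ℏ)) + ℏ²·V₂(φ(ℏ)). Then g(0) = V₀(φ₀), g′(0) = V₁(φ₀), and g is twice differentiable at 0 with g″(0) = 2·[ V₂(φ₀) − (1/2)·φ′(0)²·V₀″(φ₀) ], where φ′(0) = −V₁′(φ₀)/V₀″(φ₀). Equivalently, V_eff(φ_min(ℏ)) = V₀(φ₀) + ℏ V₁(φ₀) + ℏ²[V₂(φ₀) − ½ φ₁² V₀″(φ₀)] + O(ℏ³) with φ₁ = φ′(0). -/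
/-! Along a curve `φ` of critical points of `V₀ + ℏV₁ + ℏ²V₂` the contribution of `φ′` to `g′`
cancels, so `g′(ℏ) = V₁(φ(ℏ)) + 2ℏV₂(φ(ℏ))` near `0` (envelope theorem), and hence
`g″(0) = V₁′(φ₀)φ′(0) + 2V₂(φ₀)`. Differentiating the stationarity condition at `ℏ = 0` gives
`V₀″(φ₀)φ′(0) + V₁′(φ₀) = 0`; here `V₁′` and `V₂′` are not differentiated, because `ℏ u(ℏ)` has
derivative `u(0)` at `0` as soon as `u` is continuous there. -/

open Filter Topology

section

variable {𝕜 E F : Type*} [NontriviallyNormedField 𝕜]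
  [NormedAddCommGroup E] [NormedSpace 𝕜 E] [NormedAddCommGroup F] [NormedSpace 𝕜 F]

/-- The loop expansion `V₀ + ℏV₁ + ℏ²V₂` to second order, with `h` for `ℏ`. For scalar
coefficients it is the effective potential; vector values are allowed so that the same expression
also describes the derivative of the potential with respect to the fields. -/
def loopExpansion (V₀ V₁ V₂ : E → F) (h : 𝕜) (x : E) : F :=
  V₀ x + h • V₁ x + h ^ 2 • V₂ x

variable {V₀ V₁ V₂ : E → F} {φ : 𝕜 → E}

theorem fderiv_loopExpansion {h : 𝕜} {x : E} (hV₀ : DifferentiableAt 𝕜 V₀ x)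
    (hV₁ : DifferentiableAt 𝕜 V₁ x) (hV₂ : DifferentiableAt 𝕜 V₂ x) :
    fderiv 𝕜 (loopExpansion V₀ V₁ V₂ h) x =
      loopExpansion (fderiv 𝕜 V₀) (fderiv 𝕜 V₁) (fderiv 𝕜 V₂) h x :=
  ((hV₀.hasFDerivAt.add (hV₁.hasFDerivAt.const_smul h)).add
    (hV₂.hasFDerivAt.const_smul (h ^ 2))).fderiv

theorem deriv_loopExpansion {V₀ V₁ V₂ : 𝕜 → F} {h x : 𝕜} (hV₀ : DifferentiableAt 𝕜 V₀ x)
    (hV₁ : DifferentiableAt 𝕜 V₁ x) (hV₂ : DifferentiableAt 𝕜 V₂ x) :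
    deriv (loopExpansion V₀ V₁ V₂ h) x =
      loopExpansion (deriv V₀) (deriv V₁) (deriv V₂) h x :=
  congr($(fderiv_loopExpansion hV₀ hV₁ hV₂) 1)

theorem hasDerivAt_loopExpansion_of_fderiv_eq_zero {h : 𝕜}
    (hV₀ : DifferentiableAt 𝕜 V₀ (φ h)) (hV₁ : DifferentiableAt 𝕜 V₁ (φ h))
    (hV₂ : DifferentiableAt 𝕜 V₂ (φ h)) (hφ : DifferentiableAt 𝕜 φ h)
    (hstat : fderiv 𝕜 (loopExpansion V₀ V₁ V₂ h) (φ h) = 0) :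
    HasDerivAt (fun t ↦ loopExpansion V₀ V₁ V₂ t (φ t))
      (V₁ (φ h) + h • (2 : 𝕜) • V₂ (φ h)) h := by
  have chain {V : E → F} (hV : DifferentiableAt 𝕜 V (φ h)) :
      HasDerivAt (fun t ↦ V (φ t)) (fderiv 𝕜 V (φ h) (deriv φ h)) h :=
    hV.hasFDerivAt.comp_hasDerivAt h hφ.hasDerivAt
  have φ_contribution_eq_zero : fderiv 𝕜 V₀ (φ h) (deriv φ h)
      + h • fderiv 𝕜 V₁ (φ h) (deriv φ h) + h ^ 2 • fderiv 𝕜 V₂ (φ h) (deriv φ h) = 0 := by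
    rw [fderiv_loopExpansion hV₀ hV₁ hV₂] at hstat
    exact congr($hstat (deriv φ h))
  refine (((chain hV₀).add ((hasDerivAt_id h).smul (chain hV₁))).add
    ((hasDerivAt_pow 2 h).smul (chain hV₂))).congr_deriv ?_
  rw [← sub_eq_zero, ← φ_contribution_eq_zero]
  simp only [id, Nat.cast_ofNat, Nat.add_one_sub_one, pow_one]
  module

theorem hasDerivAt_sub_smul_of_continuousAt {u : 𝕜 → F} {a : 𝕜} (hu : ContinuousAt u a) :
    HasDerivAt (fun t ↦ (t - a) • u t) (u a) a := by
  rw [hasDerivAt_iff_tendsto_slope]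
  refine (hu.tendsto.mono_left nhdsWithin_le_nhds).congr' ?_
  filter_upwards [self_mem_nhdsWithin] with t ht
  rw [slope_def_module, sub_self, zero_smul, sub_zero, inv_smul_smul₀ (sub_ne_zero.mpr ht)]

theorem hasDerivAt_loopExpansion_zero {V₀' : E →L[𝕜] F} {φ' : E}
    (hV₀ : HasFDerivAt V₀ V₀' (φ 0)) (hV₁ : ContinuousAt V₁ (φ 0))
    (hV₂ : ContinuousAt V₂ (φ 0)) (hφ : HasDerivAt φ φ' 0) :
    HasDerivAt (fun h ↦ loopExpansion V₀ V₁ V₂ h (φ h)) (V₀' φ' + V₁ (φ 0)) 0 := by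
  have quotient_continuousAt : ContinuousAt (fun h ↦ V₁ (φ h) + h • V₂ (φ h)) 0 :=
    (hV₁.comp hφ.continuousAt).add (continuousAt_id.smul (hV₂.comp hφ.continuousAt))
  convert (hV₀.comp_hasDerivAt 0 hφ).add
    (hasDerivAt_sub_smul_of_continuousAt quotient_continuousAt) using 1
  · ext h
    simp [loopExpansion, smul_smul, sq, add_assoc]
  · simp

theorem eventually_differentiableAt_of_contDiffAt {V : E → F} {x : E}
    (hV : ContDiffAt 𝕜 1 V x) : ∀ᶠ y in 𝓝 x, DifferentiableAt 𝕜 V y :=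
  (hV.eventually (by simp)).mono fun _ hy ↦ hy.differentiableAt_one

theorem fderiv_fderiv_apply_deriv_eq_neg_fderiv_of_critical
    (hV₀ : ContDiffAt 𝕜 2 V₀ (φ 0)) (hV₁ : ContDiffAt 𝕜 1 V₁ (φ 0))
    (hV₂ : ContDiffAt 𝕜 1 V₂ (φ 0)) (hφ : DifferentiableAt 𝕜 φ 0)
    (hstat : ∀ᶠ h in 𝓝 0, fderiv 𝕜 (loopExpansion V₀ V₁ V₂ h) (φ h) = 0) :
    fderiv 𝕜 (fderiv 𝕜 V₀) (φ 0) (deriv φ 0) = -fderiv 𝕜 V₁ (φ 0) := by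
  have hasDerivAt_gradient := hasDerivAt_loopExpansion_zero
    ((hV₀.fderiv_right (m := 1) (by norm_num)).differentiableAt_one.hasFDerivAt)
    (hV₁.continuousAt_fderiv one_ne_zero) (hV₂.continuousAt_fderiv one_ne_zero) hφ.hasDerivAt
  have gradient_eventuallyEq_zero :
      (fun h ↦ loopExpansion (fderiv 𝕜 V₀) (fderiv 𝕜 V₁) (fderiv 𝕜 V₂) h (φ h)) =ᶠ[𝓝 0] 0 := by
    filter_upwards [hstat,
      hφ.continuousAt (eventually_differentiableAt_of_contDiffAt (hV₀.of_le one_le_two)),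
      hφ.continuousAt (eventually_differentiableAt_of_contDiffAt hV₁),
      hφ.continuousAt (eventually_differentiableAt_of_contDiffAt hV₂)] with h hcrit h₀ h₁ h₂
    rw [← fderiv_loopExpansion h₀ h₁ h₂, hcrit, Pi.zero_apply]
  exact eq_neg_of_add_eq_zero_left <| hasDerivAt_gradient.unique <|
    (hasDerivAt_const 0 0).congr_of_eventuallyEq gradient_eventuallyEq_zero

theorem eventually_hasDerivAt_loopExpansion_of_critical
    (hV₀ : ContDiffAt 𝕜 1 V₀ (φ 0)) (hV₁ : ContDiffAt 𝕜 1 V₁ (φ 0))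
    (hV₂ : ContDiffAt 𝕜 1 V₂ (φ 0)) (hφ : ∀ᶠ h in 𝓝 0, DifferentiableAt 𝕜 φ h)
    (hstat : ∀ᶠ h in 𝓝 0, fderiv 𝕜 (loopExpansion V₀ V₁ V₂ h) (φ h) = 0) :
    ∀ᶠ h in 𝓝 0, HasDerivAt (fun t ↦ loopExpansion V₀ V₁ V₂ t (φ t))
      (V₁ (φ h) + h • (2 : 𝕜) • V₂ (φ h)) h := by
  have hφ_cont := hφ.self_of_nhds.continuousAt
  filter_upwards [hstat, hφ, hφ_cont (eventually_differentiableAt_of_contDiffAt hV₀),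
    hφ_cont (eventually_differentiableAt_of_contDiffAt hV₁),
    hφ_cont (eventually_differentiableAt_of_contDiffAt hV₂)] with h hcrit hφh h₀ h₁ h₂
  exact hasDerivAt_loopExpansion_of_fderiv_eq_zero h₀ h₁ h₂ hφh hcrit

theorem fderiv_fderiv_apply_eq_smul_deriv_deriv (f : 𝕜 → F) (x u v : 𝕜) :
    fderiv 𝕜 (fderiv 𝕜 f) x u v = (u * v) • deriv (deriv f) x := by
  have h := iteratedFDeriv_apply_eq_iteratedDeriv_mul_prod (f := f) (x := x) (m := ![u, v])
  simpa [iteratedFDeriv_two_apply, iteratedDeriv_succ, iteratedDeriv_one] using h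

theorem hasDerivAt_deriv_loopExpansion_of_critical
    (hV₀ : ContDiffAt 𝕜 1 V₀ (φ 0)) (hV₁ : ContDiffAt 𝕜 1 V₁ (φ 0))
    (hV₂ : ContDiffAt 𝕜 1 V₂ (φ 0)) (hφ : ∀ᶠ h in 𝓝 0, DifferentiableAt 𝕜 φ h)
    (hstat : ∀ᶠ h in 𝓝 0, fderiv 𝕜 (loopExpansion V₀ V₁ V₂ h) (φ h) = 0) :
    HasDerivAt (deriv fun h ↦ loopExpansion V₀ V₁ V₂ h (φ h))
      (fderiv 𝕜 V₁ (φ 0) (deriv φ 0) + (2 : 𝕜) • V₂ (φ 0)) 0 := by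
  refine (hasDerivAt_loopExpansion_zero (V₂ := 0) hV₁.differentiableAt_one.hasFDerivAt
    (hV₂.continuousAt.const_smul (2 : 𝕜)) continuousAt_const
    hφ.self_of_nhds.hasDerivAt).congr_of_eventuallyEq ?_
  filter_upwards [eventually_hasDerivAt_loopExpansion_of_critical hV₀ hV₁ hV₂ hφ hstat]
    with h envelope
  rw [envelope.deriv, loopExpansion, Pi.smul_apply, Pi.zero_apply, smul_zero, add_zero]

theorem stmt_9_general
    (hV₀ : ContDiffAt 𝕜 2 V₀ (φ 0)) (hV₁ : ContDiffAt 𝕜 1 V₁ (φ 0))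
    (hV₂ : ContDiffAt 𝕜 1 V₂ (φ 0)) (hφ : ∀ᶠ h in 𝓝 0, DifferentiableAt 𝕜 φ h)
    (hstat : ∀ᶠ h in 𝓝 0, fderiv 𝕜 (loopExpansion V₀ V₁ V₂ h) (φ h) = 0)
    {g : 𝕜 → F} (hg : ∀ h, g h = loopExpansion V₀ V₁ V₂ h (φ h)) :
    g 0 = V₀ (φ 0) ∧ HasDerivAt g (V₁ (φ 0)) 0 ∧
    HasDerivAt (deriv g)
      ((2 : 𝕜) • V₂ (φ 0) - fderiv 𝕜 (fderiv 𝕜 V₀) (φ 0) (deriv φ 0) (deriv φ 0)) 0 ∧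
    fderiv 𝕜 (fderiv 𝕜 V₀) (φ 0) (deriv φ 0) = -fderiv 𝕜 V₁ (φ 0) := by
  obtain rfl := funext hg
  have hV₀_one := hV₀.of_le one_le_two
  have envelope := eventually_hasDerivAt_loopExpansion_of_critical hV₀_one hV₁ hV₂ hφ hstat
  have implicit :=
    fderiv_fderiv_apply_deriv_eq_neg_fderiv_of_critical hV₀ hV₁ hV₂ hφ.self_of_nhds hstat
  refine ⟨by simp [loopExpansion], by simpa using envelope.self_of_nhds, ?_, implicit⟩
  rw [implicit, neg_apply, sub_neg_eq_add, add_comm]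
  exact hasDerivAt_deriv_loopExpansion_of_critical hV₀_one hV₁ hV₂ hφ hstat

end

/-- Equation (Vcurve) of Section III.A: the value of the effective potential
`V₀ + ℏV₁ + ℏ²V₂` at its ℏ-expanded extremum `φ(ℏ)` has Taylor data
`g(0) = V₀(φ₀)`, `g′(0) = V₁(φ₀)`,
`g″(0) = 2[V₂(φ₀) − ½ φ′(0)² V₀″(φ₀)]`, with
`φ′(0) = −V₁′(φ₀)/V₀″(φ₀)`. -/
theorem stmt_9 (V₀ V₁ V₂ : ℝ → ℝ) (hV₀ : ContDiff ℝ 2 V₀)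
    (hV₁ : ContDiff ℝ 1 V₁) (hV₂ : ContDiff ℝ 1 V₂)
    (φ : ℝ → ℝ) (U : Set ℝ) (hU : U ∈ nhds (0 : ℝ))
    (hφ : ∀ h ∈ U, DifferentiableAt ℝ φ h)
    (φ₀ : ℝ) (hφ0 : φ 0 = φ₀) (h1 : deriv V₀ φ₀ = 0)
    (h2 : deriv (deriv V₀) φ₀ ≠ 0)
    (hstat : ∀ h ∈ U,
      deriv V₀ (φ h) + h * deriv V₁ (φ h) + h ^ 2 * deriv V₂ (φ h) = 0)
    (g : ℝ → ℝ) (hg : ∀ h, g h = V₀ (φ h) + h * V₁ (φ h) + h ^ 2 * V₂ (φ h)) :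
    g 0 = V₀ φ₀ ∧ deriv g 0 = V₁ φ₀ ∧
    DifferentiableAt ℝ (deriv g) 0 ∧
    deriv (deriv g) 0
      = 2 * (V₂ φ₀ - (1 / 2) * (deriv φ 0) ^ 2 * deriv (deriv V₀) φ₀) ∧
    deriv φ 0 = - deriv V₁ φ₀ / deriv (deriv V₀) φ₀ := by
  subst hφ0
  have critical : ∀ᶠ h in 𝓝 0, fderiv ℝ (loopExpansion V₀ V₁ V₂ h) (φ h) = 0 := by
    filter_upwards [hU] with h hh
    exact ContinuousLinearMap.ext_ring <| (deriv_loopExpansion (hV₀.differentiable two_ne_zero _)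
      (hV₁.differentiable_one _) (hV₂.differentiable_one _)).trans (hstat h hh)
  obtain ⟨value, first, second, implicit⟩ := stmt_9_general hV₀.contDiffAt hV₁.contDiffAt
    hV₂.contDiffAt (mem_of_superset hU hφ) critical hg
  refine ⟨value, first.deriv, second.differentiableAt, ?_, ?_⟩
  · rw [second.deriv, fderiv_fderiv_apply_eq_smul_deriv_deriv, smul_eq_mul, smul_eq_mul]
    ring
  · have implicit_one := congr($implicit 1)
    rw [fderiv_fderiv_apply_eq_smul_deriv_deriv, mul_one, smul_eq_mul] at implicit_one
    exact eq_div_of_mul_eq h2 implicit_one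
end

section
/- Let D, λ̄, T₀ > 0 and E ≥ 0, and set φ₀ = T₀·√(2D/λ̄) (the tree-level broken minimum). Consider the high-temperature effective potential V(φ, T) = D(T² − T₀²)φ² − E T φ³ + (λ̄/4)φ⁴. Then the degeneracy condition V(φ₀, T_C) = 0 has exactly one positive solution T_C, given by T_C = T₀ · [ E T₀/(λ̄ φ₀) + √( (E T₀/(λ̄ φ₀))² + 1/2 ) ]. -/
/-!
At a nonzero stationary point `φ₀` of the tree-level potential the quartic term equals half of
`D T₀² φ₀²`, so in the reduced temperature `x = T / T₀` the one-loop potential is `D φ₀² T₀²` times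
the monic quadratic `x² - 2 a x - 1/2` with `a = E T₀ / (λ̄ φ₀)`. Its constant term is negative, so
its roots have opposite signs, and the positive one is `a + √(a² + 1/2)`.
-/

theorem add_sqrt_sq_add_pos (a : ℝ) {b : ℝ} (hb : 0 < b) : 0 < a + √(a ^ 2 + b) := by
  have neg_lt_sqrt : -a < √(a ^ 2 + b) := Real.lt_sqrt_of_sq_lt (by linarith [neg_sq a])
  linarith

theorem sq_sub_two_mul_sub_eq_mul {a b : ℝ} (h : 0 ≤ a ^ 2 + b) (x : ℝ) :
    x ^ 2 - 2 * a * x - b = (x - (a + √(a ^ 2 + b))) * (x + (√(a ^ 2 + b) - a)) := by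
  linear_combination Real.sq_sqrt h

theorem sq_sub_two_mul_sub_eq_zero_iff_of_pos {a b x : ℝ} (hb : 0 ≤ b) (hx : 0 < x) :
    x ^ 2 - 2 * a * x - b = 0 ↔ x = a + √(a ^ 2 + b) := by
  have le_sqrt : a ≤ √(a ^ 2 + b) := Real.le_sqrt_of_sq_le (by linarith)
  have other_factor_ne_zero : x + (√(a ^ 2 + b) - a) ≠ 0 := by linarith
  rw [sq_sub_two_mul_sub_eq_mul (by positivity), mul_eq_zero_iff_right other_factor_ne_zero,
    sub_eq_zero]

/-- The high-temperature one-loop effective potential `V(φ, T)`, normalized to vanish at `φ = 0`.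
The parameter `lam` is the quartic coupling `λ̄`. -/
noncomputable def effectivePotential (D lam T₀ E φ T : ℝ) : ℝ :=
  D * (T ^ 2 - T₀ ^ 2) * φ ^ 2 - E * T * φ ^ 3 + (lam / 4) * φ ^ 4

theorem mul_sq_mul_sqrt_two_mul_div {D lam : ℝ} (hlam : lam ≠ 0) (h : 0 ≤ D / lam) (T₀ : ℝ) :
    lam * (T₀ * √(2 * D / lam)) ^ 2 = 2 * D * T₀ ^ 2 := by
  rw [mul_pow, Real.sq_sqrt (by rw [mul_div_assoc]; positivity)]
  field_simp

section TreeLevelStationaryPoint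

variable {D lam T₀ φ₀ : ℝ}

theorem effectivePotential_mul_eq (hlam : lam ≠ 0) (hφ₀ : φ₀ ≠ 0)
    (hstat : lam * φ₀ ^ 2 = 2 * D * T₀ ^ 2) (E x : ℝ) :
    effectivePotential D lam T₀ E φ₀ (T₀ * x) =
      D * φ₀ ^ 2 * T₀ ^ 2 * (x ^ 2 - 2 * (E * T₀ / (lam * φ₀)) * x - 1 / 2) := by
  have cubic_coeff : E * T₀ * φ₀ ^ 3 = D * φ₀ ^ 2 * T₀ ^ 2 * (2 * (E * T₀ / (lam * φ₀))) := by
    field_simp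
    linear_combination E * T₀ * hstat
  have quartic_term : lam / 4 * φ₀ ^ 4 = D * φ₀ ^ 2 * T₀ ^ 2 / 2 := by
    linear_combination φ₀ ^ 2 / 4 * hstat
  unfold effectivePotential
  linear_combination quartic_term - x * cubic_coeff

theorem effectivePotential_eq_zero_iff (hD : D ≠ 0) (hT₀ : 0 < T₀)
    (hstat : lam * φ₀ ^ 2 = 2 * D * T₀ ^ 2) (E : ℝ) {T : ℝ} (hT : 0 < T) :
    effectivePotential D lam T₀ E φ₀ T = 0 ↔
      T = T₀ * (E * T₀ / (lam * φ₀) + √((E * T₀ / (lam * φ₀)) ^ 2 + 1 / 2)) := by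
  have hprod : lam * φ₀ ^ 2 ≠ 0 := by rw [hstat]; positivity
  have hlam : lam ≠ 0 := left_ne_zero_of_mul hprod
  have hφ₀ : φ₀ ≠ 0 := pow_ne_zero_iff two_ne_zero |>.mp (right_ne_zero_of_mul hprod)
  obtain ⟨x, rfl⟩ : ∃ x, T = T₀ * x := ⟨T / T₀, (mul_div_cancel₀ T hT₀.ne').symm⟩
  have hx : 0 < x := pos_of_mul_pos_right hT hT₀.le
  have prefactor_ne_zero : D * φ₀ ^ 2 * T₀ ^ 2 ≠ 0 := by positivity
  rw [effectivePotential_mul_eq hlam hφ₀ hstat, mul_eq_zero_iff_left prefactor_ne_zero,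
    sq_sub_two_mul_sub_eq_zero_iff_of_pos (by norm_num) hx, mul_right_inj' hT₀.ne']

-- For `φ₀ ≠ 0`, `hstat` is the vanishing of the `φ`-derivative of `-D T₀² φ² + (λ̄/4) φ⁴` at `φ₀`.
theorem stmt_10_general (hD : D ≠ 0) (hT₀ : 0 < T₀)
    (hstat : lam * φ₀ ^ 2 = 2 * D * T₀ ^ 2) {E TC : ℝ}
    (hTC : TC = T₀ * (E * T₀ / (lam * φ₀) + √((E * T₀ / (lam * φ₀)) ^ 2 + 1 / 2))) :
    (0 < TC ∧ effectivePotential D lam T₀ E φ₀ TC = 0) ∧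
      ∀ T : ℝ, 0 < T → effectivePotential D lam T₀ E φ₀ T = 0 → T = TC := by
  have hTC_pos : 0 < TC := hTC ▸ mul_pos hT₀ (add_sqrt_sq_add_pos _ one_half_pos)
  have zero_iff {T : ℝ} (hT : 0 < T) : effectivePotential D lam T₀ E φ₀ T = 0 ↔ T = TC :=
    hTC ▸ effectivePotential_eq_zero_iff hD hT₀ hstat E hT
  exact ⟨⟨hTC_pos, (zero_iff hTC_pos).mpr rfl⟩, fun T hT => (zero_iff hT).mp⟩

end TreeLevelStationaryPoint

/-- The O(ℏ) gauge-independent critical temperature (Section III.B): with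
`φ₀ = T₀√(2D/λ̄)`, the degeneracy condition `V(φ₀, T_C) = 0` for
`V(φ, T) = D(T² − T₀²)φ² − ETφ³ + (λ̄/4)φ⁴` has exactly one positive
solution, namely `T_C = T₀ (ET₀/(λ̄φ₀) + √((ET₀/(λ̄φ₀))² + 1/2))`. -/
theorem stmt_10 (D lam T₀ E : ℝ) (hD : 0 < D) (hlam : 0 < lam)
    (hT₀ : 0 < T₀) (hE : 0 ≤ E)
    (φ₀ : ℝ) (hφ₀ : φ₀ = T₀ * Real.sqrt (2 * D / lam))
    (TC : ℝ)
    (hTC : TC = T₀ * (E * T₀ / (lam * φ₀)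
      + Real.sqrt ((E * T₀ / (lam * φ₀)) ^ 2 + 1 / 2))) :
    (0 < TC ∧ D * (TC ^ 2 - T₀ ^ 2) * φ₀ ^ 2 - E * TC * φ₀ ^ 3
        + (lam / 4) * φ₀ ^ 4 = 0)
    ∧ ∀ T : ℝ, 0 < T →
        D * (T ^ 2 - T₀ ^ 2) * φ₀ ^ 2 - E * T * φ₀ ^ 3
          + (lam / 4) * φ₀ ^ 4 = 0 → T = TC := by
  subst hφ₀
  exact stmt_10_general hD.ne' hT₀ (mul_sq_mul_sqrt_two_mul_div hlam.ne' (by positivity) T₀) hTC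
end
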